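/- arXiv:1901.08320 — 2 statements merged into one kernel-verified Lean document; each statement's English description precedes it below -/
import Mathlib

section
/- For r ≥ 1, the real Waring rank of F = x^r y^r (x + y) is 2r + 1, while its complex Waring rank is r + 1; hence the gap between the real and the complex Waring rank can be arbitrarily large. -/
open MvPolynomial

noncomputable def lin (c : ℂ × ℂ) : MvPolynomial (Fin 2) ℂ :=
  C c.1 * X 0 + C c.2 * X 1

noncomputable def waringRank (d : ℕ) (F : MvPolynomial (Fin 2) ℂ) : ℕ :=
  sInf {r | ∃ (a : Fin r → ℂ) (c : Fin r → ℂ × ℂ), F = ∑ i, C (a i) * lin (c i) ^ d}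

noncomputable def rlin (c : ℝ × ℝ) : MvPolynomial (Fin 2) ℝ :=
  C c.1 * X 0 + C c.2 * X 1

noncomputable def realWaringRank (d : ℕ) (F : MvPolynomial (Fin 2) ℝ) : ℕ :=
  sInf {r | ∃ (a : Fin r → ℝ) (c : Fin r → ℝ × ℝ), F = ∑ i, C (a i) * rlin (c i) ^ d}

namespace WG

open Finset

variable {K : Type*} [Field K] [CharZero K]

lemma choose_ne (r : ℕ) : (((2*r+1).choose r : ℕ) : K) ≠ 0 := by
  have : 0 < (2*r+1).choose r := Nat.choose_pos (by omega)
  exact_mod_cast this.ne'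

lemma choose_symm' (r : ℕ) : (2*r+1).choose (r+1) = (2*r+1).choose r :=
  Nat.choose_symm_half r

/-- coefficients from representation -/
lemma coeffs (r n : ℕ) (a : Fin n → K) (c : Fin n → K × K)
    (h : (X (0 : Fin 2) ^ r * X 1 ^ r * (X 0 + X 1) : MvPolynomial (Fin 2) K)
      = ∑ i, C (a i) * (C (c i).1 * X 0 + C (c i).2 * X 1) ^ (2*r+1)) (i : ℕ) (hi : i ≤ 2*r+1) :
    ∑ j, a j * ((c j).1 ^ i * (c j).2 ^ (2*r+1-i))
      = if i = r ∨ i = r+1 then (((2*r+1).choose r : ℕ) : K)⁻¹ else 0 := by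
  have h2 := congrArg (fun p => (MvPolynomial.aeval
    (![Polynomial.X, 1] : Fin 2 → Polynomial K) p).coeff i) h
  simp only [map_mul, map_pow, map_add, map_sum, MvPolynomial.aeval_X, MvPolynomial.aeval_C,
    Matrix.cons_val_zero, Matrix.cons_val_one, one_pow, mul_one, Polynomial.finsetSum_coeff,
    Polynomial.algebraMap_eq, Polynomial.coeff_C_mul] at h2
  have e : ∀ u v : K, ((Polynomial.C u * Polynomial.X + Polynomial.C v)^(2*r+1)).coeff i
      = u^i * v^(2*r+1-i) * ((2*r+1).choose i : ℕ) := by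
    intro u v
    rw [add_pow, Polynomial.finsetSum_coeff, Finset.sum_eq_single i]
    · rw [mul_pow, ← Polynomial.C_pow, ← Polynomial.C_pow, ← Polynomial.C_eq_natCast,
        Polynomial.coeff_mul_C, Polynomial.coeff_mul_C, Polynomial.coeff_C_mul,
        Polynomial.coeff_X_pow_self, mul_one]
    · intro b _ hb
      rw [mul_pow, ← Polynomial.C_pow, ← Polynomial.C_pow, ← Polynomial.C_eq_natCast,
        Polynomial.coeff_mul_C, Polynomial.coeff_mul_C, Polynomial.coeff_C_mul,
        Polynomial.coeff_X_pow, if_neg (Ne.symm hb)]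
      simp
    · intro hh; simp at hh; omega
  simp only [e] at h2
  have hN : (((2*r+1).choose i : ℕ) : K) ≠ 0 := by
    have : 0 < (2*r+1).choose i := Nat.choose_pos hi
    exact_mod_cast this.ne'
  simp only [← mul_assoc] at h2 ⊢
  rw [← Finset.sum_mul] at h2
  rw [mul_add, mul_one, ← pow_succ, Polynomial.coeff_add, Polynomial.coeff_X_pow,
    Polynomial.coeff_X_pow] at h2
  replace h2 := (eq_mul_inv_iff_mul_eq₀ hN).2 h2.symm
  rw [h2]
  by_cases h1 : i = r
  · subst h1; simp
  · by_cases h3 : i = r+1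
    · subst h3; simp [choose_symm']
    · simp [h1, h3]

lemma repr_of (r n : ℕ) (a : Fin n → K) (c : Fin n → K × K)
    (h : ∀ i ≤ 2*r+1, ∑ j, a j * ((c j).1 ^ i * (c j).2 ^ (2*r+1-i))
      = if i = r ∨ i = r+1 then (((2*r+1).choose r : ℕ) : K)⁻¹ else 0) :
    (X (0 : Fin 2) ^ r * X 1 ^ r * (X 0 + X 1) : MvPolynomial (Fin 2) K)
      = ∑ i, C (a i) * (C (c i).1 * X 0 + C (c i).2 * X 1) ^ (2*r+1) := by
  have e : ∀ j, C (a j) * (C (c j).1 * X 0 + C (c j).2 * X 1) ^ (2*r+1)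
      = ∑ i ∈ range (2*r+1+1), (C (a j * ((c j).1 ^ i * (c j).2 ^ (2*r+1-i)))
        * (X (0 : Fin 2) ^ i * X 1 ^ (2*r+1-i) * (((2*r+1).choose i : ℕ) : MvPolynomial (Fin 2) K))) := by
    intro j
    rw [add_pow, Finset.mul_sum]
    refine Finset.sum_congr rfl fun i _ => ?_
    simp only [mul_pow, map_mul, map_pow]
    ring
  simp only [e]
  rw [Finset.sum_comm]
  simp only [← Finset.sum_mul, ← map_sum]
  have hN := choose_ne (K := K) r
  have hC : C ((((2*r+1).choose r : ℕ) : K)⁻¹) * (((2*r+1).choose r : ℕ) : MvPolynomial (Fin 2) K) = 1 := by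
    have := congrArg (C (σ := Fin 2)) (inv_mul_cancel₀ hN)
    simpa using this
  rw [Finset.sum_eq_add r (r+1) (by omega)]
  · rw [h r (by omega), h (r+1) (by omega), if_pos (Or.inl rfl), if_pos (Or.inr rfl), choose_symm',
      show 2*r+1-r = r+1 by omega, show 2*r+1-(r+1) = r by omega]
    linear_combination (-(X (0 : Fin 2) ^ r * X 1 ^ r * (X 0 + X 1))) * hC
  · intro i hi hne
    rw [h i (by simp at hi; omega), if_neg (by tauto)]
    simp
  · intro hh; rw [Finset.mem_range] at hh; omega
  · intro hh; rw [Finset.mem_range] at hh; omega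

lemma apolar (r n : ℕ) (a : Fin n → K) (c : Fin n → K × K)
    (h : (X (0 : Fin 2) ^ r * X 1 ^ r * (X 0 + X 1) : MvPolynomial (Fin 2) K)
      = ∑ i, C (a i) * (C (c i).1 * X 0 + C (c i).2 * X 1) ^ (2*r+1))
    (f : Polynomial K) (hf : f.natDegree ≤ 2*r+1)
    (hz : ∀ j, (c j).2 ≠ 0 → f.eval ((c j).1 / (c j).2) = 0)
    (hinf : (∃ j, (c j).2 = 0) → f.coeff (2*r+1) = 0) :
    f.coeff r + f.coeff (r+1) = 0 := by
  have hc := coeffs r n a c h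
  have key : ∑ i ∈ range (2*r+1+1), f.coeff i *
      ∑ j, a j * ((c j).1 ^ i * (c j).2 ^ (2*r+1-i)) = 0 := by
    simp only [Finset.mul_sum]
    rw [Finset.sum_comm]
    refine Finset.sum_eq_zero fun j _ => ?_
    have : ∑ i ∈ range (2*r+1+1), f.coeff i * ((c j).1 ^ i * (c j).2 ^ (2*r+1-i)) = 0 := by
      by_cases h0 : (c j).2 = 0
      · refine Finset.sum_eq_zero fun i hi => ?_
        by_cases hi2 : i = 2*r+1
        · rw [hi2, hinf ⟨j, h0⟩, zero_mul]
        · rw [h0, zero_pow (by simp at hi; omega)]; simp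
      · have := hz j h0
        rw [Polynomial.eval_eq_sum_range' (n := 2*r+1+1) (by omega)] at this
        have h3 := congrArg (fun x => x * (c j).2^(2*r+1)) this
        simp only [zero_mul, Finset.sum_mul] at h3
        rw [← h3]
        refine Finset.sum_congr rfl fun i hi => ?_
        have : (c j).2^(2*r+1) = (c j).2^i * (c j).2^(2*r+1-i) := by
          rw [← pow_add]; congr 1; simp at hi; omega
        rw [this, div_pow]
        field_simp
    calc _ = a j * ∑ i ∈ range (2*r+1+1), f.coeff i * ((c j).1 ^ i * (c j).2 ^ (2*r+1-i)) := by
            rw [Finset.mul_sum]; exact Finset.sum_congr rfl fun i _ => by ring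
      _ = 0 := by rw [this, mul_zero]
  have hN := choose_ne (K := K) r
  rw [Finset.sum_eq_add r (r+1) (by omega)] at key
  · rw [hc r (by omega), hc (r+1) (by omega), if_pos (Or.inl rfl), if_pos (Or.inr rfl),
      ← add_mul] at key
    exact (mul_eq_zero.mp key).resolve_right (inv_ne_zero hN)
  · intro i hi hne
    rw [hc i (by simp at hi; omega), if_neg (by tauto), mul_zero]
  · intro hh; rw [Finset.mem_range] at hh; omega
  · intro hh; rw [Finset.mem_range] at hh; omega

lemma complex_lower (r n : ℕ) (hn : n ≤ r) (a : Fin n → K) (c : Fin n → K × K)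
    (h : (X (0 : Fin 2) ^ r * X 1 ^ r * (X 0 + X 1) : MvPolynomial (Fin 2) K)
      = ∑ i, C (a i) * (C (c i).1 * X 0 + C (c i).2 * X 1) ^ (2*r+1)) (hr : 1 ≤ r) : False := by
  set P : Polynomial K := Polynomial.X^(r-n) * ∏ j, (Polynomial.X - Polynomial.C ((c j).1/(c j).2))
  have hm2 : (∏ j, (Polynomial.X - Polynomial.C ((c j).1/(c j).2))).Monic :=
    Polynomial.monic_prod_of_monic _ _ fun j _ => Polynomial.monic_X_sub_C _
  have hm : P.Monic := (Polynomial.monic_X_pow _).mul hm2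
  have hd : P.natDegree = r := by
    rw [(Polynomial.monic_X_pow _).natDegree_mul hm2, Polynomial.natDegree_X_pow,
      Polynomial.natDegree_finsetProd_X_sub_C_eq_card]
    simp; omega
  have := apolar r n a c h P (by omega) (fun j _ => by
    simp only [P, Polynomial.eval_mul, Polynomial.eval_prod]
    rw [Finset.prod_eq_zero (mem_univ j) (by simp), mul_zero])
    (fun _ => Polynomial.coeff_eq_zero_of_natDegree_lt (by omega))
  rw [Polynomial.coeff_eq_zero_of_natDegree_lt (n := r+1) (by omega)] at this
  have h1 : P.coeff r = 1 := by
    have := hm.coeff_natDegree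
    rwa [hd] at this
  rw [h1] at this
  simp at this

lemma complex_upper (r : ℕ) (hr : 1 ≤ r) : ∃ (a : Fin (r+1) → ℂ) (c : Fin (r+1) → ℂ × ℂ),
    (X (0 : Fin 2) ^ r * X 1 ^ r * (X 0 + X 1) : MvPolynomial (Fin 2) ℂ)
      = ∑ i, C (a i) * (C (c i).1 * X 0 + C (c i).2 * X 1) ^ (2*r+1) := by
  obtain ⟨μ, hμ⟩ : ∃ μ : ℂ, IsPrimitiveRoot μ (r+2) :=
    ⟨_, Complex.isPrimitiveRoot_exp (r+2) (by omega)⟩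
  set κ : ℂ := (((2*r+1).choose r : ℕ) : ℂ)⁻¹
  have hS : ∀ m, ∑ k ∈ range (r+2), (μ^k)^m = if (r+2) ∣ m then ((r+2 : ℕ) : ℂ) else 0 := by
    intro m
    have e : ∀ k, (μ^k)^m = (μ^m)^k := fun k => by rw [← pow_mul, ← pow_mul, mul_comm]
    simp only [e]
    split_ifs with hd
    · rw [(hμ.pow_eq_one_iff_dvd m).2 hd]; simp
    · have h1 : μ^m ≠ 1 := fun h => hd ((hμ.pow_eq_one_iff_dvd m).1 h)
      have h2 := geom_sum_mul (μ^m) (r+2)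
      rw [← pow_mul, mul_comm m, pow_mul, hμ.pow_eq_one, one_pow, sub_self] at h2
      exact (mul_eq_zero.mp h2).resolve_right (sub_ne_zero.2 h1)
  have hn : ((r+2 : ℕ) : ℂ) ≠ 0 := by exact_mod_cast (by omega : r+2 ≠ 0)
  refine ⟨fun k => κ * (-1)^r / ((r+2 : ℕ) : ℂ) * ((μ^(k.val+1))^2 - μ^(k.val+1)),
    fun k => (-μ^(k.val+1), 1), repr_of r _ _ _ fun i hi => ?_⟩
  set g : ℕ → ℂ := fun k => κ * (-1)^r / ((r+2 : ℕ) : ℂ) * ((μ^k)^2 - μ^k) * (-μ^k)^i with hg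
  have h1 : ∑ k ∈ range (r+2), g k = κ * (-1)^r * (-1)^i / ((r+2 : ℕ) : ℂ) *
      (∑ k ∈ range (r+2), (μ^k)^(i+2) - ∑ k ∈ range (r+2), (μ^k)^(i+1)) := by
    rw [← Finset.sum_sub_distrib, Finset.mul_sum]
    refine Finset.sum_congr rfl fun k _ => ?_
    simp only [hg]
    rw [neg_pow (μ^k) i]
    ring
  have h2 : ∑ k ∈ range (r+2), g k = ∑ k : Fin (r+1), g (k.val+1) := by
    rw [Finset.sum_range_succ', ← Fin.sum_univ_eq_sum_range (fun k => g (k+1))]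
    simp [hg]
  trans ∑ k : Fin (r+1), g (k.val+1)
  · refine Finset.sum_congr rfl fun k _ => ?_
    simp [hg]
  rw [← h2, h1, hS, hS]
  have d1 : (r+2 ∣ i+2) ↔ i = r := by
    constructor
    · rintro ⟨q, hq⟩
      have : q < 2 := by by_contra hh; nlinarith
      interval_cases q <;> omega
    · rintro rfl; exact dvd_rfl
  have d2 : (r+2 ∣ i+1) ↔ i = r+1 := by
    constructor
    · rintro ⟨q, hq⟩
      have : q < 2 := by by_contra hh; nlinarith
      interval_cases q <;> omega
    · rintro rfl; exact dvd_rfl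
  simp only [d1, d2]
  have hp : ((-1:ℂ)^r) * (-1)^r = 1 := by rw [← mul_pow]; simp
  by_cases c1 : i = r
  · subst c1
    simp only [true_or, if_true]
    rw [if_neg (by omega), sub_zero, div_mul_cancel₀ _ hn, mul_assoc, hp, mul_one]
  · by_cases c2 : i = r+1
    · subst c2
      simp only [or_true, if_true]
      rw [if_neg c1, zero_sub, mul_neg, div_mul_cancel₀ _ hn, pow_succ]
      linear_combination κ * hp
    · simp [c1, c2]

/-- Laguerre -/
lemma laguerre (T : Finset ℝ) (hT : T.Nonempty) (x : ℝ) (P : Polynomial ℝ)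
    (hP : P = ∏ t ∈ T, (Polynomial.X - Polynomial.C t)) :
    0 < (P.derivative.eval x)^2 - P.eval x * P.derivative.derivative.eval x := by
  induction T using Finset.induction_on generalizing P with
  | empty => simp at hT
  | insert b T hb ih =>
    rw [Finset.prod_insert hb] at hP
    rcases T.eq_empty_or_nonempty with h0 | h0
    · subst h0; subst hP; simp
    · have := ih h0 _ rfl
      set g := ∏ t ∈ T, (Polynomial.X - Polynomial.C t) with hg
      have e : (P.derivative.eval x)^2 - P.eval x * P.derivative.derivative.eval x =
        (g.eval x)^2 + (x-b)^2 * ((g.derivative.eval x)^2 - g.eval x * g.derivative.derivative.eval x) := by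
        subst hP
        simp [Polynomial.derivative_mul]
        ring
      rw [e]
      by_cases hx : g.eval x = 0
      · have : x ≠ b := by
          rintro rfl
          rw [hg, Polynomial.eval_prod, Finset.prod_eq_zero_iff] at hx
          obtain ⟨t, ht, h⟩ := hx
          simp at h
          rw [sub_eq_zero] at h
          exact hb (h ▸ ht)
        have : 0 < (x-b)^2 := by have := sub_ne_zero.2 this; positivity
        positivity
      · positivity

lemma laguerre' (P : Polynomial ℝ) (h1 : 1 ≤ P.natDegree)
    (h : P.natDegree ≤ P.roots.toFinset.card) (x : ℝ) :
    0 < (P.derivative.eval x)^2 - P.eval x * P.derivative.derivative.eval x := by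
  have hP0 : P ≠ 0 := by rintro rfl; simp at h1
  have c1 := Polynomial.card_roots' P
  have c2 := Multiset.toFinset_card_le P.roots
  have hnd : P.roots.Nodup := Multiset.toFinset_card_eq_card_iff_nodup.1 (by omega)
  have e := Polynomial.C_leadingCoeff_mul_prod_multiset_X_sub_C (p := P) (by omega)
  have e2 : (P.roots.map fun a => Polynomial.X - Polynomial.C a).prod
      = ∏ t ∈ P.roots.toFinset, (Polynomial.X - Polynomial.C t) := by
    rw [Finset.prod_eq_multiset_prod, Multiset.toFinset_val, hnd.dedup]
  rw [e2] at e
  have L := laguerre P.roots.toFinset (Finset.card_pos.1 (by omega)) x _ rfl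
  have hl : 0 < P.leadingCoeff^2 := by
    have := Polynomial.leadingCoeff_ne_zero.2 hP0; positivity
  set Q := ∏ t ∈ P.roots.toFinset, (Polynomial.X - Polynomial.C t)
  have e3 : P.derivative = Polynomial.C P.leadingCoeff * Q.derivative := by
    conv_lhs => rw [← e]
    rw [Polynomial.derivative_C_mul]
  have e4 : P.derivative.derivative = Polynomial.C P.leadingCoeff * Q.derivative.derivative := by
    rw [e3, Polynomial.derivative_C_mul]
  have e5 : P.eval x = P.leadingCoeff * Q.eval x := by
    conv_lhs => rw [← e]
    simp
  rw [e4, e3, e5]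
  simp only [Polynomial.eval_mul, Polynomial.eval_C]
  nlinarith [mul_pos hl L]

lemma iter_roots (P : Polynomial ℝ) (h : P.natDegree ≤ P.roots.toFinset.card) (k : ℕ) :
    (Polynomial.derivative^[k] P).natDegree ≤ (Polynomial.derivative^[k] P).roots.toFinset.card := by
  induction k with
  | zero => simpa using h
  | succ k ih =>
    rw [Function.iterate_succ_apply']
    have := Polynomial.card_roots_toFinset_le_derivative (Polynomial.derivative^[k] P)
    rw [Polynomial.natDegree_derivative]
    omega

lemma iter_deg (P : Polynomial ℝ) (k : ℕ) :
    (Polynomial.derivative^[k] P).natDegree = P.natDegree - k := by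
  induction k with
  | zero => simp
  | succ k ih =>
    rw [Function.iterate_succ_apply', Polynomial.natDegree_derivative, ih]
    omega

lemma no_real (r : ℕ) (hr : 1 ≤ r) (T : Finset ℝ) (hT : r ≤ T.card) (P : Polynomial ℝ)
    (hP : P = ∏ t ∈ T, (Polynomial.X - Polynomial.C t))
    (h1 : P.coeff r + P.coeff (r+1) = 0) (h2 : P.coeff (r-1) + P.coeff r = 0) : False := by
  obtain ⟨s, rfl⟩ : ∃ s, r = s+1 := ⟨r-1, by omega⟩
  have hd : P.natDegree = T.card := by
    rw [hP, Polynomial.natDegree_finsetProd_X_sub_C_eq_card]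
  have hro : P.natDegree ≤ P.roots.toFinset.card := by
    rw [hd, hP, Polynomial.roots_prod_X_sub_C]; simp
  have L := laguerre' _ (by rw [iter_deg]; omega)
    (iter_roots P hro s) 0
  rw [← Function.iterate_succ_apply' (⇑Polynomial.derivative),
    ← Function.iterate_succ_apply' (⇑Polynomial.derivative)] at L
  simp only [← Polynomial.coeff_zero_eq_eval_zero, Polynomial.coeff_iterate_derivative,
    zero_add, Nat.descFactorial_self, nsmul_eq_mul] at L
  simp only [Nat.add_sub_cancel] at h2
  have a1 : P.coeff s = - P.coeff (s+1) := by linarith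
  have a2 : P.coeff (s+1+1) = - P.coeff (s+1) := by linarith
  simp only [Nat.succ_eq_add_one, a1, a2, Nat.factorial_succ] at L
  push_cast at L
  have : 0 ≤ ((s.factorial : ℝ) * P.coeff (s+1))^2 * (s+1) := by positivity
  nlinarith

lemma real_lower (r n : ℕ) (hr : 1 ≤ r) (hn : n ≤ 2*r) (a : Fin n → ℝ) (c : Fin n → ℝ × ℝ)
    (h : (X (0 : Fin 2) ^ r * X 1 ^ r * (X 0 + X 1) : MvPolynomial (Fin 2) ℝ)
      = ∑ i, C (a i) * (C (c i).1 * X 0 + C (c i).2 * X 1) ^ (2*r+1)) : False := by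
  classical
  set Z : Finset ℝ := (univ.filter fun j => (c j).2 ≠ 0).image fun j => (c j).1/(c j).2 with hZ
  obtain ⟨D, hD, hZD, hinf, hDr⟩ : ∃ D, D ≤ 2*r ∧ Z.card ≤ D ∧ ((∃ j, (c j).2 = 0) → D < 2*r) ∧ r ≤ D := by
    have hle : Z.card ≤ (univ.filter fun j => (c j).2 ≠ 0).card := Finset.card_image_le
    by_cases hh : ∃ j, (c j).2 = 0
    · refine ⟨2*r-1, by omega, ?_, fun _ => by omega, by omega⟩
      obtain ⟨j, hj⟩ := hh
      have : (univ.filter fun j => (c j).2 ≠ 0).card < (univ : Finset (Fin n)).card :=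
        Finset.card_lt_card (Finset.filter_ssubset.2 ⟨j, mem_univ _, by simpa using hj⟩)
      simp only [Finset.card_univ, Fintype.card_fin] at this
      omega
    · refine ⟨2*r, le_rfl, ?_, fun h => absurd h hh, by omega⟩
      have := Finset.card_le_univ (univ.filter fun j => (c j).2 ≠ 0)
      simp only [Fintype.card_fin] at this
      omega
  obtain ⟨T, hZT, hTc⟩ := Infinite.exists_superset_card_eq Z D hZD
  set P : Polynomial ℝ := ∏ t ∈ T, (Polynomial.X - Polynomial.C t) with hP
  have hd : P.natDegree = D := by
    rw [hP, Polynomial.natDegree_finsetProd_X_sub_C_eq_card, hTc]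
  have hz : ∀ j, (c j).2 ≠ 0 → P.eval ((c j).1 / (c j).2) = 0 := by
    intro j hj
    rw [hP, Polynomial.eval_prod]
    refine Finset.prod_eq_zero (hZT (Finset.mem_image.2 ⟨j, by simpa using hj, rfl⟩)) (by simp)
  have A := apolar r n a c h P (by omega) hz
    (fun _ => Polynomial.coeff_eq_zero_of_natDegree_lt (by omega))
  have B := apolar r n a c h (P * Polynomial.X)
    (Polynomial.natDegree_mul_le.trans (by rw [Polynomial.natDegree_X]; omega))
    (fun j hj => by rw [Polynomial.eval_mul, hz j hj, zero_mul])
    (fun hh => by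
      rw [Polynomial.coeff_mul_X]
      exact Polynomial.coeff_eq_zero_of_natDegree_lt (by have := hinf hh; omega))
  refine no_real r hr T (by omega) P hP A ?_
  obtain ⟨s, rfl⟩ : ∃ s, r = s+1 := ⟨r-1, by omega⟩
  rw [Polynomial.coeff_mul_X, Polynomial.coeff_mul_X] at B
  simpa using B

lemma antipal (r : ℕ) : ∃ v : Fin (2*r+1) → ℝ, Function.Injective v ∧
    (∏ k, (Polynomial.X - Polynomial.C (v k))).coeff r
      + (∏ k, (Polynomial.X - Polynomial.C (v k))).coeff (r+1) = 0 := by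
  set v : Fin (2*r+1) → ℝ := fun k => (2:ℝ)^((k.val : ℤ) - r) with hv
  have hinv : ∀ k, v k.rev = (v k)⁻¹ := by
    intro k
    simp only [hv, ← zpow_neg]
    congr 1
    rw [Fin.val_rev]
    omega
  have hpos : ∀ k, v k ≠ 0 := fun k => by simp only [hv]; positivity
  refine ⟨v, ?_, ?_⟩
  · intro k l hkl
    have := zpow_right_injective₀ (a := (2:ℝ)) (by norm_num) (by norm_num) hkl
    ext; simp at this; omega
  set P := ∏ k, (Polynomial.X - Polynomial.C (v k)) with hP
  have hd : P.natDegree = 2*r+1 := by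
    rw [hP, Polynomial.natDegree_finsetProd_X_sub_C_eq_card]; simp
  have hprod : ∏ k, v k = 1 := by
    have h1 : ∏ k, v k = (∏ k, v k)⁻¹ := by
      rw [← Finset.prod_inv_distrib, ← Equiv.prod_comp Fin.revPerm]
      exact Finset.prod_congr rfl fun k _ => hinv k
    have h2 : 0 < ∏ k, v k := Finset.prod_pos fun k _ => by simp only [hv]; positivity
    have h3 : (∏ k, v k) * (∏ k, v k) = 1 := by
      nth_rewrite 2 [h1]; exact mul_inv_cancel₀ h2.ne'
    nlinarith
  have hrev : ∀ x : ℝ, x ≠ 0 → P.reverse.eval x = - P.eval x := by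
    intro x hx
    let _ : Invertible (x⁻¹) := invertibleOfNonzero (inv_ne_zero hx)
    have h0 := Polynomial.eval₂_reverse_mul_pow (RingHom.id ℝ) x⁻¹ P
    rw [invOf_eq_inv, inv_inv, hd] at h0
    change P.reverse.eval x * _ = P.eval x⁻¹ at h0
    have h1 : P.eval x⁻¹ = ∏ k, (x⁻¹ * v k * (-1) * (x - v k.rev)) := by
      rw [hP, Polynomial.eval_prod]
      refine Finset.prod_congr rfl fun k _ => ?_
      have := hpos k
      rw [hinv]
      simp only [Polynomial.eval_sub, Polynomial.eval_X, Polynomial.eval_C]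
      field_simp
      ring
    have h2 : ∏ k : Fin (2*r+1), (x - v k.rev) = P.eval x := by
      rw [hP, Polynomial.eval_prod, ← Equiv.prod_comp Fin.revPerm]
      simp
    rw [h1, Finset.prod_mul_distrib, Finset.prod_mul_distrib, Finset.prod_mul_distrib, h2, hprod,
      Finset.prod_const, Finset.prod_const, Finset.card_univ, Fintype.card_fin,
      Odd.neg_one_pow ⟨r, rfl⟩] at h0
    have h3 : (x⁻¹)^(2*r+1) ≠ 0 := pow_ne_zero _ (inv_ne_zero hx)
    apply mul_right_cancel₀ h3
    rw [h0]; ring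
  have hrev' : P.reverse = - P := by
    refine Polynomial.eq_of_infinite_eval_eq _ _ ((Set.infinite_of_finite_compl (s := {x : ℝ | x ≠ 0}) ?_).mono ?_)
    · simp [Set.compl_ofPred]
    · intro x hx; simpa using hrev x hx
  have := congrArg (fun p => p.coeff r) hrev'
  simp only [Polynomial.coeff_reverse, hd, Polynomial.coeff_neg] at this
  rw [Polynomial.revAt_le (by omega), show 2*r+1-r = r+1 by omega] at this
  linarith

lemma real_upper (r : ℕ) : ∃ (a : Fin (2*r+1) → ℝ) (c : Fin (2*r+1) → ℝ × ℝ),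
    (X (0 : Fin 2) ^ r * X 1 ^ r * (X 0 + X 1) : MvPolynomial (Fin 2) ℝ)
      = ∑ i, C (a i) * (C (c i).1 * X 0 + C (c i).2 * X 1) ^ (2*r+1) := by
  obtain ⟨v, hv, hc⟩ := antipal r
  set P := ∏ k, (Polynomial.X - Polynomial.C (v k)) with hP
  set κ : ℝ := (((2*r+1).choose r : ℕ) : ℝ)⁻¹
  let φ : Polynomial ℝ →ₗ[ℝ] ℝ := κ • (Polynomial.lcoeff ℝ r + Polynomial.lcoeff ℝ (r+1))
  have hφ : ∀ f, φ f = κ * (f.coeff r + f.coeff (r+1)) := fun f => by simp [φ]; ring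
  have hd : P.natDegree = 2*r+1 := by
    rw [hP, Polynomial.natDegree_finsetProd_X_sub_C_eq_card]; simp
  have hm : P.Monic := Polynomial.monic_prod_of_monic _ _ fun j _ => Polynomial.monic_X_sub_C _
  have hPv : ∀ k, P.eval (v k) = 0 := fun k => by
    rw [hP, Polynomial.eval_prod]
    exact Finset.prod_eq_zero (mem_univ k) (by simp)
  have low : ∀ f : Polynomial ℝ, f.degree < (2*r+1 : ℕ) →
      ∑ k, φ (Lagrange.basis univ v k) * f.eval (v k) = φ f := by
    intro f hf
    have := Lagrange.eq_interpolate (s := univ) (v := v) (f := f) hv.injOn (by simpa using hf)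
    conv_rhs => rw [this, Lagrange.interpolate_apply, map_sum]
    refine Finset.sum_congr rfl fun k _ => ?_
    rw [← Polynomial.smul_eq_C_mul, map_smul, smul_eq_mul, mul_comm]
  have full : ∀ i ≤ 2*r+1, ∑ k, φ (Lagrange.basis univ v k) * (v k)^i = φ (Polynomial.X^i) := by
    intro i hi
    rcases hi.lt_or_eq with h | rfl
    · rw [← low _ (by rw [Polynomial.degree_X_pow]; exact_mod_cast h)]; simp
    · have := low (Polynomial.X^(2*r+1) - P) (by
        have := Polynomial.degree_sub_lt_left (p := (Polynomial.X^(2*r+1) : Polynomial ℝ)) (q := P)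
          (by rw [Polynomial.degree_X_pow, Polynomial.degree_eq_natDegree hm.ne_zero, hd])
          (by simp) (by simp [hm.leadingCoeff])
        simpa using this)
      rw [map_sub, hφ P, hc, mul_zero, sub_zero] at this
      simpa [hPv] using this
  refine ⟨fun k => φ (Lagrange.basis univ v k), fun k => (v k, 1), repr_of r _ _ _ fun i hi => ?_⟩
  simp only [one_pow, mul_one]
  rw [full i hi, hφ, Polynomial.coeff_X_pow, Polynomial.coeff_X_pow]
  by_cases c1 : i = r
  · subst c1; simp [κ]
  · by_cases c2 : i = r+1
    · subst c2; simp [κ]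
    · simp [c1, c2, Ne.symm c1, Ne.symm c2]

end WG

theorem real_vs_complex_rank_gap (r : ℕ) (hr : 1 ≤ r) :
    realWaringRank (2 * r + 1) (X (0 : Fin 2) ^ r * X 1 ^ r * (X 0 + X 1)) = 2 * r + 1 ∧
    waringRank (2 * r + 1) (X (0 : Fin 2) ^ r * X 1 ^ r * (X 0 + X 1)) = r + 1 := by
  constructor
  · refine le_antisymm (Nat.sInf_le (WG.real_upper r)) (le_csInf ⟨_, WG.real_upper r⟩ ?_)
    rintro n ⟨a, c, h⟩
    by_contra hn
    exact WG.real_lower r n hr (by omega) a c h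
  · refine le_antisymm (Nat.sInf_le (WG.complex_upper r hr)) (le_csInf ⟨_, WG.complex_upper r hr⟩ ?_)
    rintro n ⟨a, c, h⟩
    by_contra hn
    exact WG.complex_lower r n (by omega) a c h hr
end

section
/- Fix d ≥ 4 and three pairwise non-proportional linear forms L_1, L_2, L_3 ∈ ℂ[x,y]_1. Then, up to scalar multiplication, there are exactly C(d-1, 2) = (d-1)(d-2)/2 binary forms F ∈ ℂ[x,y]_d with Waring rank two that are divisible by L_1 L_2 L_3. -/
open MvPolynomial

def brk (a b : ℂ × ℂ) : ℂ := a.1 * b.2 - a.2 * b.1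

noncomputable def evp (a : ℂ × ℂ) : MvPolynomial (Fin 2) ℂ →+* ℂ := eval ![-a.2, a.1]

lemma evp_lin (a c : ℂ × ℂ) : evp a (lin c) = brk a c := by
  simp [evp, lin, brk]; ring

lemma evp_C (a : ℂ × ℂ) (c : ℂ) : evp a (C c) = c := by simp [evp]

lemma lin_smul (t : ℂ) (c : ℂ × ℂ) : lin (t • c) = C t * lin c := by
  simp [lin]; ring

lemma lin_add (a c : ℂ × ℂ) : lin (a + c) = lin a + lin c := by
  simp [lin]; ring

lemma lin_sub (a c : ℂ × ℂ) : lin (a - c) = lin a - lin c := by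
  simp [lin]; ring

lemma lin_hom (c : ℂ × ℂ) : (lin c).IsHomogeneous 1 := by
  unfold lin
  apply IsHomogeneous.add
  · simpa using (isHomogeneous_C (Fin 2) c.1).mul (isHomogeneous_X ℂ (0 : Fin 2))
  · simpa using (isHomogeneous_C (Fin 2) c.2).mul (isHomogeneous_X ℂ (1 : Fin 2))

lemma brk_add (a b c : ℂ × ℂ) : brk a (b + c) = brk a b + brk a c := by simp [brk]; ring
lemma brk_sub (a b c : ℂ × ℂ) : brk a (b - c) = brk a b - brk a c := by simp [brk]; ring
lemma brk_smul (a : ℂ × ℂ) (t : ℂ) (c : ℂ × ℂ) : brk a (t • c) = t * brk a c := by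
  simp [brk]; ring

/-- expansion in a basis -/
lemma expand (l m n : ℂ × ℂ) (h : brk l m ≠ 0) :
    n = (brk n m / brk l m) • l + (brk l n / brk l m) • m := by
  have e1 : n.1 * brk l m = brk n m * l.1 + brk l n * m.1 := by unfold brk; ring
  have e2 : n.2 * brk l m = brk n m * l.2 + brk l n * m.2 := by unfold brk; ring
  ext
  · simp; field_simp; exact e1
  · simp; field_simp; exact e2

lemma prop_of_brk (a b : ℂ × ℂ) (ha : a ≠ 0) (h : brk a b = 0) : ∃ t : ℂ, b = t • a := by
  unfold brk at h
  by_cases h1 : a.1 = 0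
  · have h2 : a.2 ≠ 0 := by
      intro h2; exact ha (Prod.ext h1 h2)
    refine ⟨b.2 / a.2, ?_⟩
    have : b.1 = 0 := by
      rw [h1] at h; simpa [h2] using h
    ext <;> simp [h1, this, h2]
  · refine ⟨b.1 / a.1, ?_⟩
    ext
    · simp [h1]
    · simp; field_simp; linear_combination h

lemma eq_zero_of_two (a b n : ℂ × ℂ) (hab : brk a b ≠ 0) (h1 : brk a n = 0) (h2 : brk b n = 0) :
    n = 0 := by
  have := expand a b n hab
  have h3 : brk n b = 0 := by unfold brk at *; linear_combination - h2
  rw [h1, h3] at this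
  simpa using this

lemma coeff_lin_pow (p q : ℂ) (d k : ℕ) :
    ((Polynomial.C p * Polynomial.X + Polynomial.C q) ^ d).coeff k
      = q ^ (d - k) * (d.choose k : ℂ) * p ^ k := by
  have : (Polynomial.C p * Polynomial.X + Polynomial.C q) ^ d
      = ((Polynomial.X + Polynomial.C q) ^ d).comp (Polynomial.C p * Polynomial.X) := by
    simp
  rw [this, Polynomial.comp_C_mul_X_coeff, Polynomial.coeff_X_add_C_pow]

lemma uniq_core (d : ℕ) (hd : 3 ≤ d) (p q r s c : ℂ) (hc : c ≠ 0) (hdet : p * s - q * r ≠ 0)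
    (h : ∀ t : ℂ, t ^ d - 1 = c * ((p * t + q) ^ d - (r * t + s) ^ d)) :
    (p = 0 ∧ s = 0) ∨ (q = 0 ∧ r = 0) := by
  have hP : (Polynomial.X ^ d - 1 : Polynomial ℂ) = Polynomial.C c *
      ((Polynomial.C p * Polynomial.X + Polynomial.C q) ^ d
        - (Polynomial.C r * Polynomial.X + Polynomial.C s) ^ d) := by
    apply Polynomial.funext
    intro t
    simpa using h t
  have key : ∀ k, 0 < k → k < d → q ^ (d - k) * p ^ k = s ^ (d - k) * r ^ k := by
    intro k hk hkd
    have h1 := congrArg (fun P => Polynomial.coeff P k) hP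
    simp only [Polynomial.coeff_sub, Polynomial.coeff_X_pow, Polynomial.coeff_one,
      Polynomial.coeff_C_mul, coeff_lin_pow] at h1
    rw [if_neg (by omega), if_neg (by omega)] at h1
    have hch : (d.choose k : ℂ) ≠ 0 := by
      exact_mod_cast (Nat.choose_pos hkd.le).ne'
    have h2 : c * (d.choose k : ℂ) * (q ^ (d - k) * p ^ k - s ^ (d - k) * r ^ k) = 0 := by
      linear_combination -h1
    have h3 := (mul_eq_zero.mp h2).resolve_left (mul_ne_zero hc hch)
    linear_combination h3
  obtain ⟨e, rfl⟩ : ∃ e, d = e + 3 := ⟨d - 3, by omega⟩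
  have k1 := key 1 (by omega) (by omega)
  have k2 := key 2 (by omega) (by omega)
  rw [show e + 3 - 1 = e + 2 by omega] at k1
  rw [show e + 3 - 2 = e + 1 by omega] at k2
  by_cases hp : p = 0
  · left
    refine ⟨hp, ?_⟩
    subst hp
    have hr : r ≠ 0 := by rintro rfl; simp at hdet
    simpa [hr] using k1
  by_cases hq : q = 0
  · right
    refine ⟨hq, ?_⟩
    subst hq
    have hs : s ≠ 0 := by rintro rfl; simp at hdet
    simpa [hs] using k1
  exfalso
  have hL : q ^ (e + 2) * p ^ 1 ≠ 0 := by positivity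
  have hR := hL
  rw [k1] at hR
  have hs : s ≠ 0 := by rintro rfl; simp at hR
  have hr : r ≠ 0 := by rintro rfl; simp at hR
  have h5 : (q ^ (e + 1) * p * r * s ^ (e + 1)) * (p * s - q * r) = 0 := by
    have : q ^ (e + 1) * p ^ 2 * (s ^ (e + 2) * r ^ 1)
        = s ^ (e + 1) * r ^ 2 * (q ^ (e + 2) * p ^ 1) := by rw [k1, k2]
    linear_combination this
  exact hdet ((mul_eq_zero.mp h5).resolve_left (by positivity))

lemma uniq (d : ℕ) (hd : 3 ≤ d) (l m l' m' : ℂ × ℂ) (c : ℂ) (hc : c ≠ 0)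
    (h1 : brk l m ≠ 0) (h2 : brk l' m' ≠ 0)
    (h : lin l ^ d - lin m ^ d = C c * (lin l' ^ d - lin m' ^ d)) :
    (∃ q r : ℂ, l' = q • m ∧ m' = r • l) ∨ (∃ p s : ℂ, l' = p • l ∧ m' = s • m) := by
  obtain ⟨p, q, hl⟩ : ∃ p q : ℂ, l' = p • l + q • m := ⟨_, _, expand l m l' h1⟩
  obtain ⟨r, s, hm⟩ : ∃ p q : ℂ, m' = p • l + q • m := ⟨_, _, expand l m m' h1⟩
  have hdet : p * s - q * r ≠ 0 := by
    intro h0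
    apply h2
    rw [hl, hm]
    simp [brk]
    unfold brk at h1
    linear_combination (l.1 * m.2 - l.2 * m.1) * h0
  have key := uniq_core d hd p q r s c hc hdet (by
    intro t
    have h3 := congrArg (evp ((1 / brk l m) • (t • m - l))) h
    have e1 : brk ((1 / brk l m) • (t • m - l)) m = -1 := by
      unfold brk at *; simp; field_simp; ring
    have e2 : brk ((1 / brk l m) • (t • m - l)) l = -t := by
      unfold brk at *; simp; field_simp; ring
    rw [hl, hm] at h3
    simp only [map_sub, map_pow, map_mul, evp_C, evp_lin, brk_add, brk_smul, e1, e2] at h3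
    have h4 : (-1 : ℂ) ^ d * (t ^ d - 1) =
        (-1 : ℂ) ^ d * (c * ((p * t + q) ^ d - (r * t + s) ^ d)) := by
      rw [show p * -t + q * -1 = (-1) * (p * t + q) by ring,
        show r * -t + s * -1 = (-1) * (r * t + s) by ring,
        show -t = (-1) * t by ring, mul_pow, mul_pow, mul_pow] at h3
      linear_combination h3
    exact mul_left_cancel₀ (by simp) h4)
  rcases key with ⟨rfl, rfl⟩ | ⟨rfl, rfl⟩
  · left; exact ⟨q, r, by simpa using hl, by simpa using hm⟩
  · right; exact ⟨p, s, by simpa using hl, by simpa using hm⟩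

noncomputable def fl (A B D : ℂ × ℂ) (u v : ℂ) : ℂ × ℂ :=
  (brk B D * (u * (v - 1))) • A - (brk D A * (u - v)) • B
noncomputable def fm (A B D : ℂ × ℂ) (u v : ℂ) : ℂ × ℂ :=
  (brk B D * (v - 1)) • A - (brk D A * (u - v)) • B

noncomputable def GG (d : ℕ) (A B D : ℂ × ℂ) (u v : ℂ) : MvPolynomial (Fin 2) ℂ :=
  lin (fl A B D u v) ^ d - lin (fm A B D u v) ^ d

lemma f_det (A B D : ℂ × ℂ) (u v : ℂ) : brk (fl A B D u v) (fm A B D u v)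
    = brk B D * brk D A * brk A B * ((v - 1) * (u - v) * (1 - u)) := by
  simp [fl, fm, brk]; ring

lemma f_1 (A B D : ℂ × ℂ) (u v : ℂ) :
    fl A B D u v - fm A B D u v = (brk B D * ((u - 1) * (v - 1))) • A := by
  ext <;> simp [fl, fm] <;> ring
lemma f_2 (A B D : ℂ × ℂ) (u v : ℂ) :
    fl A B D u v - u • fm A B D u v = (brk D A * ((u - 1) * (u - v))) • B := by
  ext <;> simp [fl, fm] <;> ring
lemma f_3 (A B D : ℂ × ℂ) (u v : ℂ) :
    fl A B D u v - v • fm A B D u v = (brk A B * (-(v - 1) * (u - v))) • D := by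
  ext <;> simp [fl, fm, brk] <;> ring

lemma brk_self (a : ℂ × ℂ) : brk a a = 0 := by simp [brk]; ring

lemma f_b1 (A B D : ℂ × ℂ) (u v : ℂ) : brk A (fl A B D u v) = brk A (fm A B D u v) := by
  have := congrArg (brk A) (f_1 A B D u v)
  rw [brk_sub, brk_smul, brk_self] at this
  linear_combination this
lemma f_b2 (A B D : ℂ × ℂ) (u v : ℂ) : brk B (fl A B D u v) = u * brk B (fm A B D u v) := by
  have := congrArg (brk B) (f_2 A B D u v)
  rw [brk_sub, brk_smul, brk_smul, brk_self] at this
  linear_combination this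
lemma f_b3 (A B D : ℂ × ℂ) (u v : ℂ) : brk D (fl A B D u v) = v * brk D (fm A B D u v) := by
  have := congrArg (brk D) (f_3 A B D u v)
  rw [brk_sub, brk_smul, brk_smul, brk_self] at this
  linear_combination this

lemma nonzero_at (P l m : ℂ × ℂ) (hP : P ≠ 0) (h : brk l m ≠ 0) (u : ℂ)
    (hu : brk P l = u * brk P m) : brk P m ≠ 0 := by
  intro h0
  rw [h0, mul_zero] at hu
  apply hP
  apply eq_zero_of_two l m P h
  · unfold brk at *; linear_combination -hu
  · unfold brk at *; linear_combination -h0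

/-- Lemma A -/
lemma classify (d : ℕ) (A B D : ℂ × ℂ) (hAB : brk A B ≠ 0) (hBD : brk B D ≠ 0)
    (u v : ℂ) (hu : u ≠ 1) (hv : v ≠ 1) (huv : u ≠ v) (l m : ℂ × ℂ)
    (h1 : brk A l = brk A m) (h2 : brk B l = u * brk B m) (h3 : brk D l = v * brk D m) :
    ∃ s : ℂ, lin l ^ d - lin m ^ d = C s * GG d A B D u v := by
  have hA : A ≠ 0 := by rintro rfl; simp [brk] at hAB
  have hB : B ≠ 0 := by rintro rfl; simp [brk] at hBD
  have hD : D ≠ 0 := by rintro rfl; simp [brk] at hBD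
  obtain ⟨a, ha⟩ := prop_of_brk A (l - m) hA (by rw [brk_sub, h1]; ring)
  obtain ⟨b, hb⟩ := prop_of_brk B (l - u • m) hB (by rw [brk_sub, brk_smul, h2]; ring)
  obtain ⟨e, he⟩ := prop_of_brk D (l - v • m) hD (by rw [brk_sub, brk_smul, h3]; ring)
  have hu' := sub_ne_zero.mpr hu
  have hv' := sub_ne_zero.mpr hv
  have huv' := sub_ne_zero.mpr huv
  have rel : (a * (u - v)) • A + (b * (v - 1)) • B + (e * (1 - u)) • D = 0 := by
    have : (u - v) • (l - m) + (v - 1) • (l - u • m) + (1 - u) • (l - v • m) = 0 := by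
      ext <;> simp <;> ring
    rw [ha, hb, he] at this
    rw [← this]
    ext <;> simp <;> ring
  have r2 : a * (u - v) * brk D A = b * (v - 1) * brk B D := by
    have := congrArg (brk D) rel
    rw [brk_add, brk_add, brk_smul, brk_smul, brk_smul, brk_self] at this
    have h0 : brk D 0 = 0 := by simp [brk]
    have h4 : brk D B = - brk B D := by simp [brk]; ring
    rw [h0, h4] at this
    linear_combination this
  -- l = s • fl
  set s := a / (brk B D * ((u - 1) * (v - 1))) with hs
  have ea : a = s * (brk B D * ((u - 1) * (v - 1))) := by
    rw [hs]; field_simp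
  have eb : b = s * (brk D A * ((u - 1) * (u - v))) := by
    have : b * (v - 1) * brk B D
        = s * (brk D A * ((u - 1) * (u - v))) * ((v - 1) * brk B D) := by
      rw [← r2, ea]; ring
    exact mul_right_cancel₀ (mul_ne_zero hv' hBD) (by linear_combination this)
  have em : m = s • fm A B D u v := by
    have : (u - 1) • m = (u - 1) • (s • fm A B D u v) := by
      calc (u - 1) • m = (l - m) - (l - u • m) := by ext <;> simp <;> ring
        _ = s • ((fl A B D u v - fm A B D u v) - (fl A B D u v - u • fm A B D u v)) := by
            rw [ha, hb, f_1, f_2, ea, eb]; ext <;> simp <;> ring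
        _ = _ := by ext <;> simp <;> ring
    exact smul_right_injective _ hu' this
  have el : l = s • fl A B D u v := by
    calc l = (l - m) + m := by simp
      _ = s • (fl A B D u v - fm A B D u v) + s • fm A B D u v := by
        rw [ha, ← em, f_1, ea, smul_smul]
      _ = _ := by rw [smul_sub]; simp
  refine ⟨s ^ d, ?_⟩
  rw [el, em, lin_smul, lin_smul, GG, mul_pow, mul_pow, C_pow]
  ring

lemma lin_zero : lin 0 = 0 := by simp [lin]

lemma GG_dvd (d : ℕ) (hd : 4 ≤ d) (A B D : ℂ × ℂ) (hAB : brk A B ≠ 0) (hBD : brk B D ≠ 0)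
    (hDA : brk D A ≠ 0)
    (u v : ℂ) (hu : u ≠ 1) (hv : v ≠ 1) (huv : u ≠ v) (hud : u ^ d = 1) (hvd : v ^ d = 1) :
    lin A * lin B * lin D ∣ GG d A B D u v := by
  have hu' := sub_ne_zero.mpr hu
  have hv' := sub_ne_zero.mpr hv
  have huv' := sub_ne_zero.mpr huv
  have hprim := Complex.isPrimitiveRoot_exp d (by omega)
  have hprimC := hprim.map_of_injective (f := (C : ℂ →+* MvPolynomial (Fin 2) ℂ))
    (C_injective _ _)
  have hprod := hprimC.pow_sub_pow_eq_prod_sub_mul (lin (fl A B D u v)) (lin (fm A B D u v))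
    (by omega)
  unfold GG
  rw [hprod]
  have hsub : ({1, C u, C v} : Finset (MvPolynomial (Fin 2) ℂ)) ⊆
      Polynomial.nthRootsFinset d (1 : MvPolynomial (Fin 2) ℂ) := by
    intro z hz
    rw [Polynomial.mem_nthRootsFinset (by omega)]
    simp only [Finset.mem_insert, Finset.mem_singleton] at hz
    rcases hz with rfl | rfl | rfl
    · simp
    · rw [← C_pow, hud, C_1]
    · rw [← C_pow, hvd, C_1]
  refine dvd_trans ?_ (Finset.prod_dvd_prod_of_subset _ _ _ hsub)
  have n1 : (1 : MvPolynomial (Fin 2) ℂ) ≠ C u := by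
    rw [← C_1]; exact fun h => hu (C_injective _ _ h).symm
  have n2 : (1 : MvPolynomial (Fin 2) ℂ) ≠ C v := by
    rw [← C_1]; exact fun h => hv (C_injective _ _ h).symm
  have n3 : (C u : MvPolynomial (Fin 2) ℂ) ≠ C v := fun h => huv (C_injective _ _ h)
  rw [Finset.prod_insert (by simp [n1, n2]), Finset.prod_pair n3]
  rw [← mul_assoc]
  have g1 := congrArg lin (f_1 A B D u v)
  have g2 := congrArg lin (f_2 A B D u v)
  have g3 := congrArg lin (f_3 A B D u v)
  simp only [lin_sub, lin_smul] at g1 g2 g3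
  rw [one_mul, g1, g2, g3]
  exact mul_dvd_mul (mul_dvd_mul (dvd_mul_left _ _) (dvd_mul_left _ _)) (dvd_mul_left _ _)

lemma GG_hom (d : ℕ) (A B D : ℂ × ℂ) (u v : ℂ) : (GG d A B D u v).IsHomogeneous d := by
  unfold GG
  apply IsHomogeneous.sub
  · simpa using (lin_hom (fl A B D u v)).pow d
  · simpa using (lin_hom (fm A B D u v)).pow d

lemma ne_zero_form (d : ℕ) (hd : 4 ≤ d) (l m : ℂ × ℂ) (h : brk l m ≠ 0) :
    lin l ^ d - lin m ^ d ≠ 0 := by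
  intro h0
  have := congrArg (evp l) h0
  simp only [map_sub, map_pow, evp_lin, brk_self, map_zero] at this
  rw [zero_pow (by omega)] at this
  have h1 : brk l m ^ d = 0 := by linear_combination -this
  exact h (pow_eq_zero_iff (by omega) |>.mp h1)

lemma evp_of_dvd (A B D : ℂ × ℂ) (F : MvPolynomial (Fin 2) ℂ) (h : lin A * lin B * lin D ∣ F) :
    evp A F = 0 ∧ evp B F = 0 ∧ evp D F = 0 := by
  obtain ⟨K, rfl⟩ := h
  simp [evp_lin, brk_self]

lemma rank_two (d : ℕ) (hd : 4 ≤ d) (A B D l m : ℂ × ℂ) (hAB : brk A B ≠ 0) (h : brk l m ≠ 0)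
    (hdvd : lin A * lin B * lin D ∣ lin l ^ d - lin m ^ d) :
    waringRank d (lin l ^ d - lin m ^ d) = 2 := by
  have hne := ne_zero_form d hd l m h
  obtain ⟨e1, e2, -⟩ := evp_of_dvd _ _ _ _ hdvd
  unfold waringRank
  apply le_antisymm
  · apply Nat.sInf_le
    refine ⟨![1, -1], ![l, m], ?_⟩
    simp [Fin.sum_univ_two, sub_eq_add_neg]
  · apply le_csInf
    · refine ⟨2, ![1, -1], ![l, m], ?_⟩
      simp [Fin.sum_univ_two, sub_eq_add_neg]
    · rintro r ⟨a, c, hF⟩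
      by_contra hr
      have : r = 0 ∨ r = 1 := by omega
      rcases this with rfl | rfl
      · simp at hF; exact hne hF
      · simp only [Fin.sum_univ_one] at hF
        rw [hF] at e1 e2 hne
        simp only [map_mul, evp_C, map_pow, evp_lin] at e1 e2
        have ha : a 0 ≠ 0 := by intro h0; simp [h0] at hne
        have hc : c 0 = 0 := by
          apply eq_zero_of_two A B _ hAB
          · exact (pow_eq_zero_iff (by omega)).mp ((mul_eq_zero.mp e1).resolve_left ha)
          · exact (pow_eq_zero_iff (by omega)).mp ((mul_eq_zero.mp e2).resolve_left ha)
        rw [hc, lin_zero, zero_pow (by omega)] at hne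
        simp at hne

lemma of_rank_two (d : ℕ) (hd : 4 ≤ d) (F : MvPolynomial (Fin 2) ℂ) (h : waringRank d F = 2) :
    ∃ l m : ℂ × ℂ, brk l m ≠ 0 ∧ F = lin l ^ d - lin m ^ d := by
  unfold waringRank at h
  set S := {r | ∃ (a : Fin r → ℂ) (c : Fin r → ℂ × ℂ), F = ∑ i, C (a i) * lin (c i) ^ d} with hS
  have hmem : sInf S ∈ S := Nat.sInf_mem (by
    by_contra hn
    rw [Set.not_nonempty_iff_eq_empty] at hn
    rw [hn] at h
    simp at h)
  rw [h] at hmem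
  obtain ⟨a, c, hF⟩ := hmem
  have h1 : ∀ (b : ℂ) (n : ℂ × ℂ), F ≠ C b * lin n ^ d := by
    intro b n hn
    have : (1 : ℕ) ∈ S := ⟨fun _ => b, fun _ => n, by simpa using hn⟩
    have := Nat.sInf_le this
    omega
  rw [Fin.sum_univ_two] at hF
  obtain ⟨z, hz⟩ := IsAlgClosed.exists_pow_nat_eq (a 0) (n := d) (by omega)
  obtain ⟨w, hw⟩ := IsAlgClosed.exists_pow_nat_eq (-a 1) (n := d) (by omega)
  have hF2 : F = lin (z • c 0) ^ d - lin (w • c 1) ^ d := by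
    rw [hF, lin_smul, lin_smul, mul_pow, mul_pow, ← C_pow, ← C_pow, hz, hw, C_neg]
    ring
  refine ⟨z • c 0, w • c 1, ?_, hF2⟩
  intro h0
  by_cases hz0 : z • c 0 = 0
  · rw [hz0, lin_zero, zero_pow (by omega)] at hF2
    apply h1 (-1) (w • c 1)
    rw [hF2, C_neg, C_1]; ring
  · obtain ⟨t, ht⟩ := prop_of_brk _ _ hz0 h0
    rw [ht, lin_smul t] at hF2
    apply h1 (1 - t ^ d) (z • c 0)
    rw [hF2, C_sub, C_1, C_pow]; ring

lemma distinct (d : ℕ) (hd : 4 ≤ d) (A B D : ℂ × ℂ) (hAB : brk A B ≠ 0) (hBD : brk B D ≠ 0)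
    (hDA : brk D A ≠ 0)
    (u v u' v' : ℂ) (hu : u ≠ 1) (hv : v ≠ 1) (huv : u ≠ v)
    (hu' : u' ≠ 1) (hv' : v' ≠ 1) (huv' : u' ≠ v') (c : ℂ) (hc : c ≠ 0)
    (h : GG d A B D u v = C c * GG d A B D u' v') :
    (u = u' ∧ v = v') ∨ (u * u' = 1 ∧ v * v' = 1) := by
  have hA : A ≠ 0 := by rintro rfl; simp [brk] at hAB
  have hB : B ≠ 0 := by rintro rfl; simp [brk] at hBD
  have hD : D ≠ 0 := by rintro rfl; simp [brk] at hBD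
  have det : ∀ u v : ℂ, u ≠ 1 → v ≠ 1 → u ≠ v → brk (fl A B D u v) (fm A B D u v) ≠ 0 := by
    intro u v hu hv huv
    rw [f_det]
    have h1 := sub_ne_zero.mpr hu.symm
    have h2 := sub_ne_zero.mpr hv
    have h3 := sub_ne_zero.mpr huv
    positivity
  have d1 := det u v hu hv huv
  have d2 := det u' v' hu' hv' huv'
  have a1 := f_b1 A B D u v
  have a2 := f_b2 A B D u v
  have a3 := f_b3 A B D u v
  have b1 := f_b1 A B D u' v'
  have b2 := f_b2 A B D u' v'
  have b3 := f_b3 A B D u' v'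
  have n1 := nonzero_at A _ _ hA d1 1 (by rw [one_mul]; exact a1)
  have n2 := nonzero_at B _ _ hB d1 _ a2
  have n3 := nonzero_at D _ _ hD d1 _ a3
  rcases uniq d (by omega) _ _ _ _ c hc d1 d2 h with ⟨q, r, e1, e2⟩ | ⟨p, s, e1, e2⟩
  · right
    rw [e1, e2] at b1 b2 b3 d2
    simp only [brk_smul] at b1 b2 b3
    rw [a1] at b1
    have hqr := mul_right_cancel₀ n1 b1
    subst hqr
    have hq : q ≠ 0 := by rintro rfl; simp [brk] at d2
    rw [a2] at b2
    rw [a3] at b3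
    constructor
    · apply mul_right_cancel₀ (mul_ne_zero hq n2); linear_combination -b2
    · apply mul_right_cancel₀ (mul_ne_zero hq n3); linear_combination -b3
  · left
    rw [e1, e2] at b1 b2 b3 d2
    simp only [brk_smul] at b1 b2 b3
    rw [a1] at b1
    have hqr := mul_right_cancel₀ n1 b1
    subst hqr
    have hq : p ≠ 0 := by rintro rfl; simp [brk] at d2
    rw [a2] at b2
    rw [a3] at b3
    constructor
    · apply mul_right_cancel₀ (mul_ne_zero hq n2); linear_combination b2
    · apply mul_right_cancel₀ (mul_ne_zero hq n3); linear_combination b3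

theorem rank_two_multiples_count (d : ℕ) (hd : 4 ≤ d) (L₁ L₂ L₃ : ℂ × ℂ)
    (h12 : L₁.1 * L₂.2 ≠ L₁.2 * L₂.1) (h23 : L₂.1 * L₃.2 ≠ L₂.2 * L₃.1)
    (h13 : L₁.1 * L₃.2 ≠ L₁.2 * L₃.1) :
    ∃ S : Finset (MvPolynomial (Fin 2) ℂ),
      S.card = (d - 1).choose 2 ∧
      (∀ G ∈ S, G.IsHomogeneous d ∧ waringRank d G = 2 ∧ lin L₁ * lin L₂ * lin L₃ ∣ G) ∧
      (∀ F : MvPolynomial (Fin 2) ℂ, F.IsHomogeneous d → waringRank d F = 2 →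
        lin L₁ * lin L₂ * lin L₃ ∣ F → ∃ G ∈ S, ∃ c : ℂ, c ≠ 0 ∧ F = C c * G) ∧
      (∀ G ∈ S, ∀ G' ∈ S, (∃ c : ℂ, c ≠ 0 ∧ G = C c * G') → G = G') := by
  classical
  haveI : NeZero d := ⟨by omega⟩
  have hAB : brk L₁ L₂ ≠ 0 := sub_ne_zero.mpr h12
  have hBD : brk L₂ L₃ ≠ 0 := sub_ne_zero.mpr h23
  have hAD : brk L₁ L₃ ≠ 0 := sub_ne_zero.mpr h13
  have hDA : brk L₃ L₁ ≠ 0 := by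
    intro h; apply hAD; unfold brk at *; linear_combination -h
  have hA : L₁ ≠ 0 := by rintro rfl; simp [brk] at hAB
  have hB : L₂ ≠ 0 := by rintro rfl; simp [brk] at hBD
  have hD : L₃ ≠ 0 := by rintro rfl; simp [brk] at hBD
  obtain ⟨ω, hω⟩ : ∃ ω : ℂ, IsPrimitiveRoot ω d := ⟨_, Complex.isPrimitiveRoot_exp d (by omega)⟩
  have hω1 : ∀ i, (ω ^ i) ^ d = 1 := by
    intro i; rw [← pow_mul, mul_comm, pow_mul, hω.pow_eq_one, one_pow]
  have ne1 : ∀ i, 0 < i → i < d → ω ^ i ≠ 1 := fun i h1 h2 => hω.pow_ne_one_of_pos_of_lt h1.ne' h2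
  have nep : ∀ i j, i < d → j < d → ω ^ i = ω ^ j → i = j := fun i j hi hj h => hω.pow_inj hi hj h
  let g : (Σ _ : ℕ, ℕ) → MvPolynomial (Fin 2) ℂ :=
    fun x => GG d L₁ L₂ L₃ (ω ^ (x.2 + 1)) (ω ^ (x.1 + 1))
  let T : Finset (Σ _ : ℕ, ℕ) := (Finset.range (d - 1)).sigma (fun j => Finset.range j)
  have hT : ∀ x, x ∈ T ↔ x.1 < d - 1 ∧ x.2 < x.1 := by
    intro x; simp [T]
  have key : ∀ x ∈ T, ∀ y ∈ T, ∀ c : ℂ, c ≠ 0 → g x = C c * g y → x = y := by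
    rintro ⟨j, i⟩ hx ⟨j', i'⟩ hy c hc h
    rw [hT] at hx hy
    simp only at hx hy
    rcases distinct d hd L₁ L₂ L₃ hAB hBD hDA (ω ^ (i + 1)) (ω ^ (j + 1))
      (ω ^ (i' + 1)) (ω ^ (j' + 1))
      (ne1 _ (by omega) (by omega)) (ne1 _ (by omega) (by omega))
      (fun h => absurd (nep _ _ (by omega) (by omega) h) (by omega))
      (ne1 _ (by omega) (by omega)) (ne1 _ (by omega) (by omega))
      (fun h => absurd (nep _ _ (by omega) (by omega) h) (by omega)) c hc h with ⟨e1, e2⟩ | ⟨e1, e2⟩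
    · have := nep _ _ (by omega) (by omega) e1
      have := nep _ _ (by omega) (by omega) e2
      obtain rfl : i = i' := by omega
      obtain rfl : j = j' := by omega
      rfl
    · exfalso
      rw [← pow_add, hω.pow_eq_one_iff_dvd] at e1 e2
      obtain ⟨k, hk⟩ := e1
      obtain ⟨k', hk'⟩ := e2
      have hk1 : k = 1 := by
        have : k < 2 := by by_contra hh; nlinarith [Nat.mul_le_mul_left d (not_lt.mp hh), hx.1, hy.1, hx.2, hy.2, Nat.sub_le d 1]
        have : k ≠ 0 := by rintro rfl; omega
        omega
      have hk1' : k' = 1 := by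
        have : k' < 2 := by
          by_contra hh
          have := Nat.mul_le_mul_left d (not_lt.mp hh)
          omega
        have : k' ≠ 0 := by rintro rfl; omega
        omega
      subst hk1 hk1'
      omega
  have classify2 : ∀ i j, 0 < i → i < j → j < d → ∀ l m : ℂ × ℂ, brk l m ≠ 0 →
      brk L₁ l = brk L₁ m → brk L₂ l = ω ^ i * brk L₂ m → brk L₃ l = ω ^ j * brk L₃ m →
      ∃ G ∈ T.image g, ∃ c : ℂ, c ≠ 0 ∧ lin l ^ d - lin m ^ d = C c * G := by
    intro i j hi hij hj l m hlm e1 e2 e3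
    obtain ⟨s, hs⟩ := classify d L₁ L₂ L₃ hAB hBD (ω ^ i) (ω ^ j)
      (ne1 _ (by omega) (by omega)) (ne1 _ (by omega) (by omega))
      (fun h => absurd (nep _ _ (by omega) (by omega) h) (by omega)) l m e1 e2 e3
    refine ⟨_, Finset.mem_image.mpr ⟨⟨j - 1, i - 1⟩, ?_, rfl⟩, s, ?_, ?_⟩
    · rw [hT]; simp only; omega
    · rintro rfl
      apply ne_zero_form d hd l m hlm
      rw [hs]; simp
    · simp only [g]
      rw [hs, show i - 1 + 1 = i by omega, show j - 1 + 1 = j by omega]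
  refine ⟨T.image g, ?_, ?_, ?_, ?_⟩
  · rw [Finset.card_image_of_injOn]
    · simp only [T, Finset.card_sigma, Finset.card_range]
      rw [Finset.sum_range_id, Nat.choose_two_right]
    · intro x hx y hy h
      exact key x hx y hy 1 one_ne_zero (by simpa using h)
  · intro G hG
    obtain ⟨⟨j, i⟩, hx, rfl⟩ := Finset.mem_image.mp hG
    rw [hT] at hx
    simp only at hx
    have c1 : ω ^ (i + 1) ≠ 1 := ne1 _ (by omega) (by omega)
    have c2 : ω ^ (j + 1) ≠ 1 := ne1 _ (by omega) (by omega)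
    have c3 : ω ^ (i + 1) ≠ ω ^ (j + 1) :=
      fun h => absurd (nep _ _ (by omega) (by omega) h) (by omega)
    have hdvd := GG_dvd d hd L₁ L₂ L₃ hAB hBD hDA _ _ c1 c2 c3 (hω1 _) (hω1 _)
    refine ⟨GG_hom _ _ _ _ _ _, ?_, hdvd⟩
    apply rank_two d hd L₁ L₂ L₃ _ _ hAB _ hdvd
    rw [f_det]
    have h1 := sub_ne_zero.mpr c1.symm
    have h2 := sub_ne_zero.mpr c2
    have h3 := sub_ne_zero.mpr c3
    positivity
  · intro F _ hF hdvd
    obtain ⟨l, m, hlm, rfl⟩ := of_rank_two d hd F hF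
    obtain ⟨e1, e2, e3⟩ := evp_of_dvd _ _ _ _ hdvd
    simp only [map_sub, map_pow, evp_lin] at e1 e2 e3
    have hz : ∀ P : ℂ × ℂ, P ≠ 0 → brk P l ^ d - brk P m ^ d = 0 →
        ∃ z : ℂ, z ^ d = 1 ∧ brk P l = z * brk P m := by
      intro P hP h
      have hm : brk P m ≠ 0 := by
        intro h0
        rw [h0, zero_pow (by omega), sub_zero, pow_eq_zero_iff (by omega)] at h
        exact nonzero_at P l m hP hlm 0 (by rw [h]; ring) h0
      refine ⟨brk P l / brk P m, ?_, by field_simp⟩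
      rw [div_pow, sub_eq_zero.mp h]
      exact div_self (pow_ne_zero _ hm)
    obtain ⟨z1, hz1, q1⟩ := hz _ hA e1
    obtain ⟨z2, hz2, q2⟩ := hz _ hB e2
    obtain ⟨z3, hz3, q3⟩ := hz _ hD e3
    have hz10 : z1 ≠ 0 := by rintro rfl; rw [zero_pow (by omega)] at hz1; simp at hz1
    have hF' : lin m ^ d = lin (z1 • m) ^ d := by
      rw [lin_smul, mul_pow, ← C_pow, hz1, C_1, one_mul]
    rw [hF']
    have hlm' : brk l (z1 • m) ≠ 0 := by
      rw [brk_smul]; exact mul_ne_zero hz10 hlm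
    obtain ⟨i, hi, hi'⟩ := hω.eq_pow_of_pow_eq_one (ξ := z2 / z1) (by rw [div_pow, hz1, hz2, div_one])
    obtain ⟨j, hj, hj'⟩ := hω.eq_pow_of_pow_eq_one (ξ := z3 / z1) (by rw [div_pow, hz1, hz3, div_one])
    have r1 : brk L₁ l = brk L₁ (z1 • m) := by rw [brk_smul, q1]
    have r2 : brk L₂ l = ω ^ i * brk L₂ (z1 • m) := by
      rw [brk_smul, q2, hi']; field_simp
    have r3 : brk L₃ l = ω ^ j * brk L₃ (z1 • m) := by
      rw [brk_smul, q3, hj']; field_simp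
    generalize z1 • m = m' at *
    have bad : ∀ (P Q : ℂ × ℂ) (t : ℂ), brk P Q ≠ 0 → brk P l = t * brk P m' →
        brk Q l = t * brk Q m' → False := by
      intro P Q t hPQ h1 h2
      have : l - t • m' = 0 := by
        apply eq_zero_of_two P Q _ hPQ
        · rw [brk_sub, brk_smul, h1, sub_self]
        · rw [brk_sub, brk_smul, h2, sub_self]
      apply hlm'
      rw [sub_eq_zero.mp this]
      simp [brk]; ring
    have i0 : 0 < i := by
      rcases Nat.eq_zero_or_pos i with rfl | h
      · exact (bad L₁ L₂ 1 hAB (by simpa using r1) (by simpa using r2)).elim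
      · exact h
    have j0 : 0 < j := by
      rcases Nat.eq_zero_or_pos j with rfl | h
      · exact (bad L₁ L₃ 1 hAD (by simpa using r1) (by simpa using r3)).elim
      · exact h
    have hij : i ≠ j := by
      rintro rfl
      exact bad L₂ L₃ _ hBD r2 r3
    rcases lt_or_gt_of_ne hij with h | h
    · exact classify2 i j i0 h hj l m' hlm' r1 r2 r3
    · have inv : ∀ k, k < d → ω ^ (d - k) * ω ^ k = 1 := by
        intro k hk; rw [← pow_add, Nat.sub_add_cancel hk.le, hω.pow_eq_one]
      obtain ⟨G, hG, c, hc, hh⟩ := classify2 (d - i) (d - j) (by omega) (by omega) (by omega) m' l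
        (by intro h0; apply hlm'; unfold brk at *; linear_combination -h0) r1.symm
        (by rw [r2, ← mul_assoc, inv i hi, one_mul]) (by rw [r3, ← mul_assoc, inv j hj, one_mul])
      refine ⟨G, hG, -c, neg_ne_zero.mpr hc, ?_⟩
      rw [C_neg]
      linear_combination -hh
  · intro G hG G' hG' ⟨c, hc, h⟩
    obtain ⟨x, hx, rfl⟩ := Finset.mem_image.mp hG
    obtain ⟨y, hy, rfl⟩ := Finset.mem_image.mp hG'
    rw [key x hx y hy c hc h]
end
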